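/- Let D = D(Γ, (g_i), (χ_i), (a_{ij})) be a generic datum of finite Cartan type (no q_{ii} is a root of unity) and λ a family of linking parameters for D with λ ≠ 0, i.e. λ_{ij} ≠ 0 for some i ≁ j. Then there exist disjoint nonempty sets X⁻ and X⁺ of connected components of the Dynkin graph of D whose union is the set of all connected components, an integer n ≥ 1, and an injective map t : {1,…,2n} → {1,…,θ} such that for all 1 ≤ i ≤ n the vertex t(i) lies in a component belonging to X⁻ and t(n+i) lies in a component belonging to X⁺, and such that the pairs (t(i), t(n+i)) and (t(n+i), t(i)) for 1 ≤ i ≤ n are exactly the ordered pairs (i,j) of linked vertices of (D, λ). -/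

import Mathlib

open scoped BigOperators

/-- `a` is a Cartan matrix of finite type: diagonal entries `2`, off-diagonal entries `≤ 0`,
`a i j = 0 ↔ a j i = 0`, and there are positive integers `d i` symmetrizing `a` such that the
symmetrized matrix is positive definite. -/
def IsFiniteCartanMatrix {θ : ℕ} (a : Fin θ → Fin θ → ℤ) : Prop :=
  (∀ i, a i i = 2) ∧
  (∀ i j, i ≠ j → a i j ≤ 0) ∧
  (∀ i j, (a i j = 0 ↔ a j i = 0)) ∧
  ∃ d : Fin θ → ℤ, (∀ i, 0 < d i) ∧ (∀ i j, d i * a i j = d j * a j i) ∧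
    (Matrix.of fun i j => ((d i * a i j : ℤ) : ℝ)).PosDef

/-- The Dynkin graph of the Cartan matrix `a`: an edge between `i ≠ j` iff `a i j ≠ 0`. -/
def dynkinGraph {θ : ℕ} (a : Fin θ → Fin θ → ℤ) : SimpleGraph (Fin θ) :=
  SimpleGraph.fromRel fun i j => a i j ≠ 0

/-- `D(Γ, (g i), (χ i), (a i j))` is a datum of finite Cartan type: with `q i j = χ j (g i)`,
one has `q i j * q j i = (q i i) ^ (a i j)` and `q i i ≠ 1`. -/
def IsCartanDatum {k : Type*} [Field k] {Γ : Type*} [CommGroup Γ] {θ : ℕ}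
    (g : Fin θ → Γ) (χ : Fin θ → Γ →* kˣ) (a : Fin θ → Fin θ → ℤ) : Prop :=
  IsFiniteCartanMatrix a ∧
  (∀ i j, χ j (g i) * χ i (g j) = χ i (g i) ^ (a i j)) ∧
  (∀ i, χ i (g i) ≠ 1)

/-- Vertices `i, j` are linkable: `i ≁ j` (they lie in different connected components of the
Dynkin graph), `g i * g j ≠ 1`, and `χ i * χ j = ε`. -/
def Linkable {k : Type*} [Field k] {Γ : Type*} [CommGroup Γ] {θ : ℕ}
    (g : Fin θ → Γ) (χ : Fin θ → Γ →* kˣ) (a : Fin θ → Fin θ → ℤ) (i j : Fin θ) : Prop :=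
  ¬ (dynkinGraph a).Reachable i j ∧ g i * g j ≠ 1 ∧ χ i * χ j = 1

/-- `lam` is a family of linking parameters for the datum: for `i ≁ j` one has
`lam j i = -q j i * lam i j`, and `lam i j = 0` whenever `g i * g j = 1` or `χ i * χ j ≠ ε`. -/
def IsLinkingFamily {k : Type*} [Field k] {Γ : Type*} [CommGroup Γ] {θ : ℕ}
    (g : Fin θ → Γ) (χ : Fin θ → Γ →* kˣ) (a : Fin θ → Fin θ → ℤ)
    (lam : Fin θ → Fin θ → k) : Prop :=
  (∀ i j, ¬ (dynkinGraph a).Reachable i j → lam j i = -(χ i (g j) : k) * lam i j) ∧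
  (∀ i j, ¬ (dynkinGraph a).Reachable i j → (g i * g j = 1 ∨ χ i * χ j ≠ 1) → lam i j = 0)

/-- Vertices `i, j` are linked: they are linkable and `lam i j ≠ 0`. -/
def Linked {k : Type*} [Field k] {Γ : Type*} [CommGroup Γ] {θ : ℕ}
    (g : Fin θ → Γ) (χ : Fin θ → Γ →* kˣ) (a : Fin θ → Fin θ → ℤ)
    (lam : Fin θ → Fin θ → k) (i j : Fin θ) : Prop :=
  Linkable g χ a i j ∧ lam i j ≠ 0

/-- The linking graph of `(D, lam)` (whose vertices are the connected components of the Dynkin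
graph, with an edge between two components iff they contain linked vertices) is bipartite,
i.e. the components can be `2`-colored so that no two linked vertices lie in equally colored
components. -/
def LinkingGraphBipartite {k : Type*} [Field k] {Γ : Type*} [CommGroup Γ] {θ : ℕ}
    (g : Fin θ → Γ) (χ : Fin θ → Γ →* kˣ) (a : Fin θ → Fin θ → ℤ)
    (lam : Fin θ → Fin θ → k) : Prop :=
  ∃ C : (dynkinGraph a).ConnectedComponent → Bool,
    ∀ i j, Linked g χ a lam i j →
      C ((dynkinGraph a).connectedComponentMk i) ≠ C ((dynkinGraph a).connectedComponentMk j)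

/-- The inclusion `{1,…,n} ↪ {1,…,2n}`. -/
def finL {n : ℕ} (r : Fin n) : Fin (2 * n) := ⟨r.1, by have := r.2; omega⟩

/-- The inclusion `{1,…,n} ↪ {1,…,2n}` sending `i` to `n + i`. -/
def finR {n : ℕ} (r : Fin n) : Fin (2 * n) := ⟨n + r.1, by have := r.2; omega⟩

/-- Two elements of a group are positively commensurable if some positive powers agree. -/
def PosCommensurable {G : Type*} [Group G] (x y : G) : Prop :=
  ∃ m n : ℕ, 0 < m ∧ 0 < n ∧ x ^ m = y ^ n

namespace PosCommensurable

variable {G : Type*} [Group G] {x y z : G}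

theorem refl (x : G) : PosCommensurable x x := ⟨1, 1, one_pos, one_pos, rfl⟩

theorem symm (h : PosCommensurable x y) : PosCommensurable y x := by
  obtain ⟨m, n, hm, hn, h⟩ := h
  exact ⟨n, m, hn, hm, h.symm⟩

theorem trans (h : PosCommensurable x y) (h' : PosCommensurable y z) : PosCommensurable x z := by
  obtain ⟨m, n, hm, hn, h⟩ := h
  obtain ⟨m', n', hm', hn', h'⟩ := h'
  refine ⟨m * m', n' * n, Nat.mul_pos hm hm', Nat.mul_pos hn' hn, ?_⟩
  rw [pow_mul, h, ← pow_mul, Nat.mul_comm, pow_mul, h', ← pow_mul]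

theorem inv (h : PosCommensurable x y) : PosCommensurable x⁻¹ y⁻¹ := by
  obtain ⟨m, n, hm, hn, h⟩ := h
  exact ⟨m, n, hm, hn, by rw [inv_pow, inv_pow, h]⟩

theorem inv_left_iff : PosCommensurable x⁻¹ y ↔ PosCommensurable x y⁻¹ :=
  ⟨fun h => by simpa using h.inv, fun h => by simpa using h.inv⟩

theorem isOfFinOrder (h : PosCommensurable x x⁻¹) : IsOfFinOrder x := by
  obtain ⟨m, n, hm, hn, h⟩ := h
  refine isOfFinOrder_iff_pow_eq_one.2 ⟨m + n, by omega, ?_⟩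
  rw [pow_add, h, inv_pow, inv_mul_cancel]

theorem of_zpow_eq {a b : ℤ} (ha : a < 0) (hb : b < 0) (h : x ^ a = y ^ b) :
    PosCommensurable x y := by
  refine ⟨a.natAbs, b.natAbs, by omega, by omega, ?_⟩
  rw [← zpow_natCast, ← zpow_natCast, Int.ofNat_natAbs_of_nonpos ha.le,
    Int.ofNat_natAbs_of_nonpos hb.le, zpow_neg, zpow_neg, h]

/-- Commensurability up to inversion. -/
def setoidUpToInv (G : Type*) [Group G] : Setoid G where
  r x y := PosCommensurable x y ∨ PosCommensurable x y⁻¹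
  iseqv := by
    refine ⟨fun x => Or.inl (refl x), ?_, ?_⟩
    · rintro x y (h | h)
      · exact Or.inl h.symm
      · exact Or.inr (inv_left_iff.1 h.symm)
    · rintro x y z (h | h) (hyz | hyz)
      · exact Or.inl (h.trans hyz)
      · exact Or.inr (h.trans hyz)
      · exact Or.inr (h.trans hyz.inv)
      · exact Or.inl (h.trans (inv_left_iff.2 (by simpa using hyz)))

/-- A choice of sign, invariant under positive commensurability, on the elements of infinite
order of a group. -/
theorem exists_sign (G : Type*) [Group G] : ∃ C : G → Prop,
    (∀ x y, PosCommensurable x y → (C x ↔ C y)) ∧ ∀ x, ¬ IsOfFinOrder x → (C x ↔ ¬ C x⁻¹) := by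
  let r : G → G := fun x => (Quotient.mk (setoidUpToInv G) x).out
  have hr : ∀ x, PosCommensurable x (r x) ∨ PosCommensurable x (r x)⁻¹ := fun x =>
    (setoidUpToInv G).symm (Quotient.mk_out (s := setoidUpToInv G) x)
  have hrr : ∀ x y, (PosCommensurable x y ∨ PosCommensurable x y⁻¹) → r x = r y := fun x y h =>
    congrArg Quotient.out (Quotient.sound (s := setoidUpToInv G) h)
  refine ⟨fun x => PosCommensurable x (r x), fun x y h => ?_, fun x hx => ?_⟩
  · simp only [hrr x y (Or.inl h)]
    exact ⟨h.symm.trans, h.trans⟩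
  · simp only [← hrr x x⁻¹ (Or.inr (by simpa using refl x)), inv_left_iff]
    exact ⟨fun h h' => hx (h.trans (inv_left_iff.1 h'.symm)).isOfFinOrder,
      fun h => (hr x).resolve_right h⟩

end PosCommensurable

section CartanDatum

variable {k : Type*} [Field k] {Γ : Type*} [CommGroup Γ] {θ : ℕ}
  {g : Fin θ → Γ} {χ : Fin θ → Γ →* kˣ} {a : Fin θ → Fin θ → ℤ} {lam : Fin θ → Fin θ → k}

theorem IsCartanDatum.posCommensurable_of_reachable (hD : IsCartanDatum g χ a) {i j : Fin θ}
    (h : (dynkinGraph a).Reachable i j) : PosCommensurable (χ i (g i)) (χ j (g j)) := by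
  obtain ⟨⟨-, hneg, hzero, -⟩, hq, -⟩ := hD
  obtain ⟨w⟩ := h
  induction w with
  | nil => exact PosCommensurable.refl _
  | @cons u v w hadj _ ih =>
    refine PosCommensurable.trans ?_ ih
    obtain ⟨hne, h⟩ := (SimpleGraph.fromRel_adj _ _ _).1 hadj
    have h1 : a u v ≠ 0 := h.elim id fun h h' => h ((hzero _ _).1 h')
    have h2 : a v u ≠ 0 := fun h' => h1 ((hzero _ _).2 h')
    refine PosCommensurable.of_zpow_eq (lt_of_le_of_ne (hneg u v hne) h1)
      (lt_of_le_of_ne (hneg v u hne.symm) h2) ?_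
    rw [← hq, ← hq, mul_comm]

theorem Linkable.symm {i j : Fin θ} (h : Linkable g χ a i j) : Linkable g χ a j i := by
  refine ⟨fun h' => h.1 h'.symm, by rw [mul_comm]; exact h.2.1, MonoidHom.ext fun x => ?_⟩
  rw [MonoidHom.mul_apply, mul_comm, ← MonoidHom.mul_apply, h.2.2]

theorem Linkable.apply_eq_inv {i j : Fin θ} (h : Linkable g χ a i j) (x : Γ) :
    χ j x = (χ i x)⁻¹ := by
  refine eq_inv_of_mul_eq_one_right ?_
  rw [← MonoidHom.mul_apply, h.2.2, MonoidHom.one_apply]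

theorem Linkable.diag_eq_inv (hD : IsCartanDatum g χ a) {i j : Fin θ}
    (h : Linkable g χ a i j) : χ j (g j) = (χ i (g i))⁻¹ := by
  have hne : i ≠ j := fun e => h.1 (e ▸ SimpleGraph.Reachable.refl _)
  have ha : a i j = 0 := by
    by_contra ha
    exact h.1 (SimpleGraph.Adj.reachable ((SimpleGraph.fromRel_adj _ _ _).2 ⟨hne, Or.inl ha⟩))
  have hq := hD.2.1 i j
  rw [ha, zpow_zero, h.apply_eq_inv (g i), h.symm.apply_eq_inv (g j), ← mul_inv, inv_eq_one] at hq
  exact eq_inv_of_mul_eq_one_right hq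

theorem Linkable.unique (hD : IsCartanDatum g χ a) (hgen : ∀ i, ¬ IsOfFinOrder (χ i (g i)))
    {i j l : Fin θ} (hj : Linkable g χ a i j) (hl : Linkable g χ a i l) : j = l := by
  by_contra hne
  have hχ : ∀ x, χ j x = χ l x := fun x => (hj.apply_eq_inv x).trans (hl.apply_eq_inv x).symm
  have hd : χ l (g l) = χ j (g j) := (hl.diag_eq_inv hD).trans (hj.diag_eq_inv hD).symm
  have hq := hD.2.1 j l
  rw [← hχ, hχ (g l), hd, ← zpow_two] at hq
  have := injective_zpow_iff_not_isOfFinOrder.2 (hgen j) hq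
  have := hD.1.2.1 j l hne
  omega

theorem Linked.symm (hlam : IsLinkingFamily g χ a lam) {i j : Fin θ}
    (h : Linked g χ a lam i j) : Linked g χ a lam j i := by
  refine ⟨h.1.symm, ?_⟩
  rw [hlam.1 i j h.1.1]
  exact mul_ne_zero (neg_ne_zero.2 (Units.ne_zero _)) h.2

theorem IsLinkingFamily.linked (hlam : IsLinkingFamily g χ a lam) {i j : Fin θ}
    (h : ¬ (dynkinGraph a).Reachable i j) (h0 : lam i j ≠ 0) : Linked g χ a lam i j :=
  ⟨⟨h, fun hg => h0 (hlam.2 i j h (Or.inl hg)),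
    by_contra fun hne => h0 (hlam.2 i j h (Or.inr hne))⟩, h0⟩

/-- In the generic case the Dynkin components can be coloured so that linked vertices lie in
components of different colours. -/
theorem IsCartanDatum.exists_coloring (hD : IsCartanDatum g χ a)
    (hgen : ∀ i, ¬ IsOfFinOrder (χ i (g i))) :
    ∃ X : Set (dynkinGraph a).ConnectedComponent, ∀ i j, Linkable g χ a i j →
      ((dynkinGraph a).connectedComponentMk i ∈ X ↔
        (dynkinGraph a).connectedComponentMk j ∉ X) := by
  obtain ⟨C, hC, hCinv⟩ := PosCommensurable.exists_sign kˣ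
  let X : Set (dynkinGraph a).ConnectedComponent :=
    {c | ∃ v, (dynkinGraph a).connectedComponentMk v = c ∧ C (χ v (g v))}
  have hX : ∀ i, (dynkinGraph a).connectedComponentMk i ∈ X ↔ C (χ i (g i)) := fun i =>
    ⟨fun ⟨v, hv, hc⟩ => (hC _ _ (hD.posCommensurable_of_reachable
      (SimpleGraph.ConnectedComponent.exact hv))).1 hc, fun h => ⟨i, rfl, h⟩⟩
  refine ⟨X, fun i j h => ?_⟩
  rw [hX, hX, h.diag_eq_inv hD]
  exact hCinv _ (hgen i)

end CartanDatum

/-- A symmetric relation on `Fin θ` which is functional and bipartite with respect to `P` can be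
enumerated as a list of disjoint pairs. -/
theorem exists_enumeration_of_matching {θ : ℕ} {L : Fin θ → Fin θ → Prop} {P : Fin θ → Prop}
    (hsymm : ∀ i j, L i j → L j i) (huniq : ∀ i j l, L i j → L i l → j = l)
    (hP : ∀ i j, L i j → (P i ↔ ¬ P j)) (hne : ∃ i j, L i j) :
    ∃ (n : ℕ) (_ : 1 ≤ n) (t : Fin (2 * n) → Fin θ), Function.Injective t ∧
      (∀ r : Fin n, P (t (finL r)) ∧ ¬ P (t (finR r))) ∧
      ∀ i j, L i j ↔
        ∃ r : Fin n, (i = t (finL r) ∧ j = t (finR r)) ∨ (i = t (finR r) ∧ j = t (finL r)) := by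
  classical
  let S := {i : Fin θ // P i ∧ ∃ j, L i j}
  let e : Fin (Fintype.card S) ≃ S := (Fintype.equivFin S).symm
  choose p hp using fun s : S => s.2.2
  have hinj : Function.Injective p := fun s s' h =>
    Subtype.ext (huniq (p s) _ _ (hsymm _ _ (hp s)) (h ▸ hsymm _ _ (hp s')))
  have hpP : ∀ s, ¬ P (p s) := fun s => (hP _ _ (hp s)).1 s.2.1
  have hS : Nonempty S := by
    obtain ⟨i, j, h⟩ := hne
    by_cases hi : P i
    · exact ⟨⟨i, hi, j, h⟩⟩
    · exact ⟨⟨j, by_contra fun hj => hi ((hP i j h).2 hj), i, hsymm _ _ h⟩⟩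
  let t : Fin (2 * Fintype.card S) → Fin θ := fun x =>
    if h : x.1 < Fintype.card S then (e ⟨x.1, h⟩).1
    else p (e ⟨x.1 - Fintype.card S, by have := x.2; omega⟩)
  have htL : ∀ r, t (finL r) = (e r).1 := fun r => by simp [t, finL]
  have htR : ∀ r, t (finR r) = p (e r) := fun r => by simp [t, finR]
  have hcases : ∀ x : Fin (2 * Fintype.card S), ∃ r, x = finL r ∨ x = finR r := fun x => by
    by_cases h : x.1 < Fintype.card S
    · exact ⟨⟨x.1, h⟩, Or.inl rfl⟩
    · refine ⟨⟨x.1 - Fintype.card S, by have := x.2; omega⟩, Or.inr (Fin.ext ?_)⟩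
      simp only [finR]
      omega
  refine ⟨Fintype.card S, Fintype.card_pos, t, ?_, fun r => ?_, fun i j => ⟨fun h => ?_, ?_⟩⟩
  · intro x y hxy
    obtain ⟨r, rfl | rfl⟩ := hcases x <;> obtain ⟨s, rfl | rfl⟩ := hcases y
    · rw [htL, htL] at hxy
      rw [e.injective (Subtype.ext hxy)]
    · rw [htL, htR] at hxy
      exact absurd (hxy ▸ (e r).2.1) (hpP _)
    · rw [htL, htR] at hxy
      exact absurd (hxy ▸ (e s).2.1) (hpP _)
    · rw [htR, htR] at hxy
      rw [e.injective (hinj hxy)]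
  · rw [htL, htR]
    exact ⟨(e r).2.1, hpP _⟩
  · have key : ∀ u v (hu : P u) (h : L u v),
        ∃ r, u = t (finL r) ∧ v = t (finR r) := fun u v hu h => by
      refine ⟨e.symm ⟨u, hu, v, h⟩, ?_, ?_⟩
      · rw [htL, e.apply_symm_apply]
      · rw [htR, e.apply_symm_apply]
        exact huniq u _ _ h (hp ⟨u, hu, v, h⟩)
    by_cases hi : P i
    · exact (key i j hi h).imp fun r hr => Or.inl hr
    · exact (key j i (by_contra fun hj => hi ((hP i j h).2 hj)) (hsymm _ _ h)).imp
        fun r hr => Or.inr hr.symm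
  · rintro ⟨r, ⟨rfl, rfl⟩ | ⟨rfl, rfl⟩⟩ <;> rw [htL, htR]
    · exact hp _
    · exact hsymm _ _ (hp _)

theorem statement6 {k : Type*} [Field k] [IsAlgClosed k] [CharZero k]
    {Γ : Type*} [CommGroup Γ] {θ : ℕ}
    (g : Fin θ → Γ) (χ : Fin θ → Γ →* kˣ) (a : Fin θ → Fin θ → ℤ)
    (lam : Fin θ → Fin θ → k)
    (hD : IsCartanDatum g χ a) (hlam : IsLinkingFamily g χ a lam)
    (hgen : ∀ i, ¬ IsOfFinOrder (χ i (g i)))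
    (hlam0 : ∃ i j, ¬ (dynkinGraph a).Reachable i j ∧ lam i j ≠ 0) :
    ∃ (Xm Xp : Set ((dynkinGraph a).ConnectedComponent)),
      Xm.Nonempty ∧ Xp.Nonempty ∧ Disjoint Xm Xp ∧ Xm ∪ Xp = Set.univ ∧
      ∃ (n : ℕ) (_ : 1 ≤ n) (t : Fin (2 * n) → Fin θ), Function.Injective t ∧
        (∀ r : Fin n, (dynkinGraph a).connectedComponentMk (t (finL r)) ∈ Xm ∧
          (dynkinGraph a).connectedComponentMk (t (finR r)) ∈ Xp) ∧
        (∀ i j, Linked g χ a lam i j ↔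
          ∃ r : Fin n, (i = t (finL r) ∧ j = t (finR r)) ∨ (i = t (finR r) ∧ j = t (finL r))) := by
  obtain ⟨X, hX⟩ := hD.exists_coloring hgen
  obtain ⟨i, j, hij, h0⟩ := hlam0
  have hlinked := hlam.linked hij h0
  obtain ⟨n, hn, t, ht, htX, htL⟩ := exists_enumeration_of_matching
    (L := Linked g χ a lam) (P := fun i => (dynkinGraph a).connectedComponentMk i ∈ X)
    (fun _ _ h => h.symm hlam) (fun _ _ _ h h' => h.1.unique hD hgen h'.1)
    (fun i j h => hX i j h.1) ⟨i, j, hlinked⟩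
  exact ⟨X, Xᶜ, ⟨_, (htX ⟨0, hn⟩).1⟩, ⟨_, (htX ⟨0, hn⟩).2⟩, disjoint_compl_right,
    Set.union_compl_self X, n, hn, t, ht, htX, htL⟩
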